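/- Let n ≥ 1 and let f_1, …, f_n ∈ L¹(ℝ) be real-valued. Then there exists a real-valued function g ∈ C_c^∞(ℝ; ℝ) such that ∫_ℝ f_j(x) e^{i g(x)} dx = 0 for all 1 ≤ j ≤ n. -/

import Mathlib

open MeasureTheory Complex

/-!
The phase `g` is found by a Newton-type argument around a rapidly oscillating phase, so no
topological input (Borsuk–Ulam) is needed.

Suppose first that there are test functions `φ k` dual to the given functions:
`∫ F j * φ k = δ j k`. For `z : ι → ℂ` consider the phase `N x + h z x`, where
`h z x = ∑ k, φ k x * 2 Re (z k * exp (-i N x))`. At `z = 0` the integrals `∫ F j * exp (i N x)` tend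
to `0` as `N → ∞` by the Riemann–Lebesgue lemma. The derivative at `z = 0` is
`i ∫ F j * exp (i N x) * h z = i z j + i ∑ k, conj (z k) * ∫ F j * φ k * exp (2 i N x)`,
which tends to `i z j`, again by Riemann–Lebesgue, and the remainder is quadratic in `z` uniformly
in `N`. Hence `-i ∫ F j * exp (i (N x + h z))` is, on a ball around `0` of radius independent of `N`,
a small Lipschitz perturbation of the identity (`approx_linear`), and it takes the value `0` once `N`
is large (`exists_phase_of_dual`). Multiplying `N x` by a cutoff equal to `1` on a large ball makes
the phase compactly supported; only the tails of the `F j` are affected.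

In general, let `V ⊆ ℝⁿ` be the space of all vectors `(∫ f j * φ)_j` with `φ` a test function. A basis
of `V` gives test functions and dual linear combinations `F k` of the `f j`; each `f j` is almost
everywhere a linear combination of the `F k`, because the difference annihilates all test functions.
-/

/-! ### Preliminary estimates -/

open Filter Topology in
/-- Riemann–Lebesgue lemma with the character normalised as `exp (i N x)`. -/
lemma tendsto_integral_mul_exp (F : ℝ → ℝ) :
    Tendsto (fun N : ℝ => ∫ x : ℝ, (F x : ℂ) * cexp (I * ((N * x : ℝ) : ℂ))) atTop (𝓝 0) := by
  have h := Real.tendsto_integral_exp_smul_cocompact (fun x => (F x : ℂ))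
  have h2 : Tendsto (fun N : ℝ => -(N / (2 * Real.pi))) atTop (cocompact ℝ) := by
    refine Tendsto.mono_right ?_ atBot_le_cocompact
    exact tendsto_neg_atTop_atBot.comp (tendsto_id.atTop_div_const (by positivity))
  refine (h.comp h2).congr fun N => ?_
  refine integral_congr_ae (Eventually.of_forall fun x => ?_)
  simp only [Circle.smul_def, Real.fourierChar_apply, smul_eq_mul]
  rw [mul_comm]
  congr 2
  have : (2 * Real.pi * -(x * -(N / (2 * Real.pi)))) = N * x := by
    field_simp
  rw [this, mul_comm]

/-- The map `a ↦ exp (i a)` differs from its linearisation at `0` by a function that is Lipschitz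
with constant of order `r` on `[-r, r]`. -/
lemma norm_exp_sub_exp_sub_le (a b : ℝ) :
    ‖cexp (I * a) - cexp (I * b) - I * ((a - b : ℝ) : ℂ)‖ ≤ (2 * |a| + 3 * |b|) * |a - b| := by
  have key : ∀ x : ℝ, ‖cexp (I * x) - 1 - I * x‖ ≤ 2 * |x| ^ 2 := by
    intro x
    rcases le_total |x| 1 with hx | hx
    · have := Complex.norm_exp_sub_one_sub_id_le (x := I * x) (by simpa using hx)
      simp only [norm_mul, norm_I, one_mul, norm_real, Real.norm_eq_abs] at this
      nlinarith [sq_nonneg |x|]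
    · have h1 := norm_sub_le (cexp (I * x) - 1) (I * x)
      have h2 := Real.norm_exp_I_mul_ofReal_sub_one_le (x := x)
      simp only [norm_mul, norm_I, one_mul, norm_real, Real.norm_eq_abs] at h1 h2
      nlinarith
  have e : cexp (I * a) - cexp (I * b) - I * ((a - b : ℝ) : ℂ)
      = cexp (I * b) * (cexp (I * ((a - b : ℝ) : ℂ)) - 1 - I * ((a - b : ℝ) : ℂ))
        + I * ((a - b : ℝ) : ℂ) * (cexp (I * b) - 1) := by
    have : cexp (I * a) = cexp (I * b) * cexp (I * ((a - b : ℝ) : ℂ)) := by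
      rw [← Complex.exp_add]; congr 1; push_cast; ring
    rw [this]; ring
  rw [e]
  refine (norm_add_le _ _).trans ?_
  have h1 := key (a - b)
  have h2 := Real.norm_exp_I_mul_ofReal_sub_one_le (x := b)
  rw [norm_mul, norm_mul, norm_mul, norm_I, norm_real, one_mul, Complex.norm_exp_I_mul_ofReal,
    one_mul]
  simp only [Real.norm_eq_abs] at h2 ⊢
  have h3 := abs_sub a b
  nlinarith [abs_nonneg (a - b), mul_le_mul_of_nonneg_left h2 (abs_nonneg (a-b)),
    mul_le_mul_of_nonneg_left h3 (abs_nonneg (a-b))]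

open Filter Topology in
lemma tendsto_integral_tail (F : ℝ → ℝ) (hF : Integrable F) :
    Tendsto (fun R : ℝ => ∫ x in (Metric.closedBall (0:ℝ) R)ᶜ, |F x|) atTop (𝓝 0) := by
  have := tendsto_setIntegral_of_antitone (μ := volume) (f := fun x => |F x|)
    (s := fun R : ℝ => (Metric.closedBall (0:ℝ) R)ᶜ)
    (fun R => Metric.isClosed_closedBall.measurableSet.compl)
    (fun R S h => Set.compl_subset_compl.2 (Metric.closedBall_subset_closedBall h))
    ⟨0, hF.abs.integrableOn⟩
  have e : ⋂ R : ℝ, (Metric.closedBall (0:ℝ) R)ᶜ = ∅ := by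
    ext x
    simp only [Set.mem_iInter, Set.mem_compl_iff, Set.mem_empty_iff_false, iff_false, not_forall,
      not_not]
    exact ⟨|x|, by simp⟩
  simpa [e] using this

/-! ### The oscillating perturbation of the phase -/

/-- The real-valued perturbation `∑ k, φ k x * 2 Re (z k * exp (-i N x))` of the phase `N x`. Its
frequency matches that of `exp (i N x)`, so that the product of the two has the non-oscillating part
`∑ k, z k * φ k x`. -/
noncomputable def pert {ι : Type*} [Fintype ι] (φ : ι → ℝ → ℝ) (N : ℝ) (z : ι → ℂ) (x : ℝ) : ℝ :=
  ∑ k, φ k x * (2 * (z k * cexp (-(I * ((N * x : ℝ) : ℂ)))).re)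

section
variable {ι : Type*} [Fintype ι] {φ : ι → ℝ → ℝ}

lemma contDiff_pert (hφ : ∀ k, ContDiff ℝ (⊤ : ℕ∞) (φ k)) (N : ℝ) (z : ι → ℂ) :
    ContDiff ℝ (⊤ : ℕ∞) (pert φ N z) := by
  unfold pert
  refine ContDiff.sum fun k _ => (hφ k).mul (contDiff_const.mul ?_)
  refine Complex.reCLM.contDiff.comp (contDiff_const.mul (ContDiff.cexp (ContDiff.neg
    (contDiff_const.mul (Complex.ofRealCLM.contDiff.comp (contDiff_const.mul contDiff_id))))))

lemma hasCompactSupport_pert (hφ : ∀ k, HasCompactSupport (φ k)) (N : ℝ) (z : ι → ℂ) :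
    HasCompactSupport (pert φ N z) := by
  unfold pert
  refine HasCompactSupport.intro (isCompact_iUnion fun k => hφ k) fun x hx => ?_
  refine Finset.sum_eq_zero fun k _ => ?_
  rw [image_eq_zero_of_notMem_tsupport (fun h => hx (Set.mem_iUnion.2 ⟨k, h⟩)), zero_mul]

lemma pert_sub (N : ℝ) (z w : ι → ℂ) (x : ℝ) :
    pert φ N z x - pert φ N w x = pert φ N (z - w) x := by
  simp only [pert, ← Finset.sum_sub_distrib]
  refine Finset.sum_congr rfl fun k _ => ?_
  simp only [Pi.sub_apply, sub_mul, Complex.sub_re]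
  ring

lemma abs_pert_le {C : ι → ℝ} (hC : ∀ k x, |φ k x| ≤ C k) (N : ℝ) (z : ι → ℂ) (x : ℝ) :
    |pert φ N z x| ≤ (2 * ∑ k, C k) * ‖z‖ := by
  unfold pert
  refine (Finset.abs_sum_le_sum_abs _ _).trans ?_
  rw [Finset.mul_sum, Finset.sum_mul]
  refine Finset.sum_le_sum fun k _ => ?_
  have h1 : |(z k * cexp (-(I * ((N * x : ℝ) : ℂ)))).re| ≤ ‖z‖ := by
    refine (Complex.abs_re_le_norm _).trans ?_
    have : -(I * ((N * x : ℝ) : ℂ)) = I * ((-(N * x) : ℝ) : ℂ) := by push_cast; ring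
    rw [norm_mul, this, Complex.norm_exp_I_mul_ofReal, mul_one]
    exact norm_le_pi_norm z k
  rw [abs_mul, abs_mul, abs_two]
  nlinarith [mul_le_mul (hC k x) h1 (abs_nonneg _) ((abs_nonneg _).trans (hC k x))]

/-- The product splits into a non-oscillating part, linear in `z`, and a part of frequency `2 N`. -/
lemma exp_mul_pert (N : ℝ) (z : ι → ℂ) (x : ℝ) :
    cexp (I * ((N * x : ℝ) : ℂ)) * (pert φ N z x : ℂ) =
      ∑ k, (z k * ((φ k x : ℝ) : ℂ) +
        (starRingEnd ℂ) (z k) * ((φ k x : ℂ) * cexp (I * ((2 * N * x : ℝ) : ℂ)))) := by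
  simp only [pert, Complex.ofReal_sum, Finset.mul_sum]
  refine Finset.sum_congr rfl fun k _ => ?_
  set e := cexp (I * ((N * x : ℝ) : ℂ)) with he
  have h2 : cexp (I * ((2 * N * x : ℝ) : ℂ)) = e * e := by
    rw [he, ← Complex.exp_add]; congr 1; push_cast; ring
  have h3 : e * cexp (-(I * ((N * x : ℝ) : ℂ))) = 1 := by
    rw [he, ← Complex.exp_add]; simp
  have h4 : (starRingEnd ℂ) (cexp (-(I * ((N * x : ℝ) : ℂ)))) = e := by
    rw [he, ← Complex.exp_conj]; simp
  have h5 := Complex.add_conj (z k * cexp (-(I * ((N * x : ℝ) : ℂ))))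
  rw [map_mul, h4] at h5
  rw [h2]
  push_cast at h5 h3 ⊢
  rw [← h5]
  linear_combination (φ k x * z k : ℂ) * h3
end

section
variable {ι : Type*} [Fintype ι] {F φ : ι → ℝ → ℝ}

/-- Where the perturbation does not vanish, a cut-off phase `p` may be replaced by `N x`. -/
lemma exp_phase_mul_pert {N : ℝ} {p : ℝ → ℝ} (hp : ∀ k x, φ k x ≠ 0 → p x = N * x)
    (u : ι → ℂ) (x : ℝ) :
    cexp (I * (p x : ℂ)) * (pert φ N u x : ℂ) =
      cexp (I * ((N * x : ℝ) : ℂ)) * (pert φ N u x : ℂ) := by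
  by_cases h : ∃ k, φ k x ≠ 0
  · obtain ⟨k, hk⟩ := h
    rw [hp k x hk]
  · push Not at h
    simp [pert, h]

lemma integrable_mul_exp {G : ℝ → ℝ} (hG : Integrable G) {q : ℝ → ℝ} (hq : Continuous q) :
    Integrable (fun x => (G x : ℂ) * cexp (I * (q x : ℂ))) := by
  refine hG.ofReal.mul_bdd (c := 1) (by fun_prop) (Filter.Eventually.of_forall fun x => ?_)
  rw [Complex.norm_exp_I_mul_ofReal]

/-- The derivative of the integral in the direction `u`, up to the factor `i`: it is `u j` plus
oscillatory integrals that are small for large `N`. -/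
lemma integral_linear_part [DecidableEq ι] (hF : ∀ j, Integrable (F j))
    (hφ : ∀ k, ContDiff ℝ (⊤ : ℕ∞) (φ k)) {C : ι → ℝ} (hC : ∀ k x, |φ k x| ≤ C k)
    (hdual : ∀ j k, ∫ x, F j x * φ k x = if j = k then 1 else 0)
    {N : ℝ} {p : ℝ → ℝ} (hp : ∀ k x, φ k x ≠ 0 → p x = N * x) (u : ι → ℂ) (j : ι) :
    ∫ x, (F j x : ℂ) * (cexp (I * (p x : ℂ)) * (pert φ N u x : ℂ)) =
      u j + ∑ k, (starRingEnd ℂ) (u k) *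
        ∫ x, ((F j x * φ k x : ℝ) : ℂ) * cexp (I * ((2 * N * x : ℝ) : ℂ)) := by
  have hint : ∀ k, Integrable (fun x => F j x * φ k x) := fun k =>
    (hF j).mul_bdd (c := C k) (hφ k).continuous.aestronglyMeasurable
      (Filter.Eventually.of_forall fun x => hC k x)
  have h1 : ∀ k, Integrable (fun x => u k * ((F j x * φ k x : ℝ) : ℂ)) := fun k =>
    (hint k).ofReal.const_mul _
  have h2 : ∀ k, Integrable (fun x => (starRingEnd ℂ) (u k) *
      (((F j x * φ k x : ℝ) : ℂ) * cexp (I * ((2 * N * x : ℝ) : ℂ)))) := fun k =>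
    (integrable_mul_exp (hint k) (by fun_prop)).const_mul _
  have h12 : ∀ k, Integrable (fun x => u k * ((F j x * φ k x : ℝ) : ℂ) + (starRingEnd ℂ) (u k) *
      (((F j x * φ k x : ℝ) : ℂ) * cexp (I * ((2 * N * x : ℝ) : ℂ)))) := fun k =>
    (h1 k).add (h2 k)
  have e : ∀ x, (F j x : ℂ) * (cexp (I * (p x : ℂ)) * (pert φ N u x : ℂ)) =
      ∑ k, (u k * ((F j x * φ k x : ℝ) : ℂ) + (starRingEnd ℂ) (u k) *
        (((F j x * φ k x : ℝ) : ℂ) * cexp (I * ((2 * N * x : ℝ) : ℂ)))) := by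
    intro x
    rw [exp_phase_mul_pert hp, exp_mul_pert, Finset.mul_sum]
    refine Finset.sum_congr rfl fun k _ => ?_
    rw [Complex.ofReal_mul (F j x)]
    ring
  simp_rw [e]
  rw [integral_finsetSum _ fun k _ => h12 k]
  have e2 : ∀ k, ∫ x, (u k * ((F j x * φ k x : ℝ) : ℂ) + (starRingEnd ℂ) (u k) *
        (((F j x * φ k x : ℝ) : ℂ) * cexp (I * ((2 * N * x : ℝ) : ℂ)))) =
      u k * (if j = k then 1 else 0) + (starRingEnd ℂ) (u k) *
        ∫ x, ((F j x * φ k x : ℝ) : ℂ) * cexp (I * ((2 * N * x : ℝ) : ℂ)) := by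
    intro k
    rw [integral_add (h1 k) (h2 k), integral_const_mul, integral_const_mul,
      integral_complex_ofReal, hdual]
    split_ifs <;> simp
  simp_rw [e2, Finset.sum_add_distrib]
  simp

/-- The map `z ↦ -i ∫ F j * exp (i (p + pert φ N z))` minus the identity is Lipschitz on the ball of
radius `ε`. The term with `ε` bounds the quadratic remainder and the term with `η` the oscillatory
part of the derivative; `K` and `M` do not depend on `N`. -/
lemma approx_linear [DecidableEq ι] (hF : ∀ j, Integrable (F j))
    (hφ : ∀ k, ContDiff ℝ (⊤ : ℕ∞) (φ k)) {C : ι → ℝ} (hC : ∀ k x, |φ k x| ≤ C k)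
    (hdual : ∀ j k, ∫ x, F j x * φ k x = if j = k then 1 else 0)
    {N : ℝ} {p : ℝ → ℝ} (hpc : Continuous p) (hp : ∀ k x, φ k x ≠ 0 → p x = N * x)
    {K M ε η : ℝ} (hK : K = 2 * ∑ k, C k) (hM : ∀ j, ∫ x, |F j x| ≤ M)
    (hη : ∀ j k, ‖∫ x, ((F j x * φ k x : ℝ) : ℂ) * cexp (I * ((2 * N * x : ℝ) : ℂ))‖ ≤ η)
    {z w : ι → ℂ} (hz : ‖z‖ ≤ ε) (hw : ‖w‖ ≤ ε) (j : ι) :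
    ‖-I * (∫ x, (F j x : ℂ) * cexp (I * ((p x + pert φ N z x : ℝ) : ℂ))) -
      -I * (∫ x, (F j x : ℂ) * cexp (I * ((p x + pert φ N w x : ℝ) : ℂ))) - (z j - w j)‖ ≤
      (5 * K ^ 2 * ε * M + Fintype.card ι * η) * ‖z - w‖ := by
  have hK0 : 0 ≤ K := by
    rw [hK]
    exact mul_nonneg zero_le_two (Finset.sum_nonneg fun k _ => (abs_nonneg _).trans (hC k 0))
  have hε : 0 ≤ ε := (norm_nonneg _).trans hz
  have hcont : ∀ v, Continuous (pert φ N v) := fun v => (contDiff_pert hφ N v).continuous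
  have hb : ∀ v x, |pert φ N v x| ≤ K * ‖v‖ := fun v x => by
    rw [hK]; exact abs_pert_le hC N v x
  have iz := integrable_mul_exp (hF j) (q := fun x => p x + pert φ N z x)
    (hpc.add (hcont z))
  have iw := integrable_mul_exp (hF j) (q := fun x => p x + pert φ N w x)
    (hpc.add (hcont w))
  have izw : Integrable fun x => (F j x : ℂ) * cexp (I * ((p x + pert φ N z x : ℝ) : ℂ)) -
      (F j x : ℂ) * cexp (I * ((p x + pert φ N w x : ℝ) : ℂ)) := iz.sub iw
  have iu : Integrable fun x => (F j x : ℂ) *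
      (cexp (I * (p x : ℂ)) * (pert φ N (z - w) x : ℂ)) := by
    have hcu := hcont (z - w)
    refine (hF j).ofReal.mul_bdd (c := K * ‖z - w‖) (by fun_prop)
      (Filter.Eventually.of_forall fun x => ?_)
    rw [norm_mul, Complex.norm_exp_I_mul_ofReal, one_mul, Complex.norm_real]
    exact hb _ x
  have hlin := integral_linear_part hF hφ hC hdual hp (z - w) j
  set c : ι → ℂ := fun k => ∫ x, ((F j x * φ k x : ℝ) : ℂ) * cexp (I * ((2 * N * x : ℝ) : ℂ))
    with hc
  have hrem : ‖(∫ x, (F j x : ℂ) * cexp (I * ((p x + pert φ N z x : ℝ) : ℂ))) -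
      (∫ x, (F j x : ℂ) * cexp (I * ((p x + pert φ N w x : ℝ) : ℂ))) -
      I * ∫ x, (F j x : ℂ) * (cexp (I * (p x : ℂ)) * (pert φ N (z - w) x : ℂ))‖ ≤
      5 * K ^ 2 * ε * M * ‖z - w‖ := by
    rw [← integral_sub iz iw, ← integral_const_mul, ← integral_sub izw (iu.const_mul I)]
    calc _ ≤ ∫ x, |F j x| * (5 * K ^ 2 * ε * ‖z - w‖) := by
          refine norm_integral_le_of_norm_le ((hF j).abs.mul_const _)
            (Filter.Eventually.of_forall fun x => ?_)
          have e : (F j x : ℂ) * cexp (I * ((p x + pert φ N z x : ℝ) : ℂ)) -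
              (F j x : ℂ) * cexp (I * ((p x + pert φ N w x : ℝ) : ℂ)) -
              I * ((F j x : ℂ) * (cexp (I * (p x : ℂ)) * (pert φ N (z - w) x : ℂ))) =
              (F j x : ℂ) * (cexp (I * (p x : ℂ)) * (cexp (I * (pert φ N z x : ℂ)) -
                cexp (I * (pert φ N w x : ℂ)) -
                I * ((pert φ N z x - pert φ N w x : ℝ) : ℂ))) := by
            rw [← pert_sub]
            push_cast
            rw [mul_add, mul_add, Complex.exp_add, Complex.exp_add]
            ring
          rw [e, norm_mul, norm_mul, Complex.norm_exp_I_mul_ofReal, one_mul, Complex.norm_real,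
            Real.norm_eq_abs]
          refine mul_le_mul_of_nonneg_left ?_ (abs_nonneg _)
          refine (norm_exp_sub_exp_sub_le _ _).trans ?_
          rw [pert_sub]
          have ha := (hb z x).trans (mul_le_mul_of_nonneg_left hz hK0)
          have hb' := (hb w x).trans (mul_le_mul_of_nonneg_left hw hK0)
          calc _ ≤ (5 * (K * ε)) * (K * ‖z - w‖) :=
                mul_le_mul (by linarith) (hb _ x) (abs_nonneg _) (by positivity)
            _ = _ := by ring
      _ = (∫ x, |F j x|) * (5 * K ^ 2 * ε * ‖z - w‖) := integral_mul_const _ _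
      _ ≤ M * (5 * K ^ 2 * ε * ‖z - w‖) :=
          mul_le_mul_of_nonneg_right (hM j) (by positivity)
      _ = _ := by ring
  have hosc : ‖∑ k, (starRingEnd ℂ) ((z - w) k) * c k‖ ≤ Fintype.card ι * η * ‖z - w‖ := by
    refine (norm_sum_le _ _).trans ?_
    calc _ ≤ ∑ _k : ι, ‖z - w‖ * η := by
          refine Finset.sum_le_sum fun k _ => ?_
          rw [norm_mul, RCLike.norm_conj]
          exact mul_le_mul (norm_le_pi_norm _ k) (hη j k) (norm_nonneg _) (norm_nonneg _)
      _ = _ := by simp; ring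
  rw [hlin] at hrem
  set Z := ∫ x, (F j x : ℂ) * cexp (I * ((p x + pert φ N z x : ℝ) : ℂ))
  set W := ∫ x, (F j x : ℂ) * cexp (I * ((p x + pert φ N w x : ℝ) : ℂ))
  set S := ∑ k, (starRingEnd ℂ) ((z - w) k) * c k
  have e : -I * Z - -I * W - (z j - w j) = -I * (Z - W - I * ((z - w) j + S)) + S := by
    simp only [Pi.sub_apply]
    linear_combination (-(z j - w j + S)) * Complex.I_mul_I
  rw [e]
  refine (norm_add_le _ _).trans ?_
  rw [norm_mul, norm_neg, norm_I, one_mul]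
  linarith

/-! ### The case of functions with dual test functions -/

open Filter Topology in
/-- The theorem for functions `F j` that admit test functions `φ k` with `∫ F j * φ k = δ j k`. -/
theorem exists_phase_of_dual [DecidableEq ι] (hF : ∀ j, Integrable (F j))
    (hφ : ∀ k, ContDiff ℝ (⊤ : ℕ∞) (φ k)) (hφc : ∀ k, HasCompactSupport (φ k))
    (hdual : ∀ j k, ∫ x, F j x * φ k x = if j = k then 1 else 0) :
    ∃ g : ℝ → ℝ, ContDiff ℝ (⊤ : ℕ∞) g ∧ HasCompactSupport g ∧
      ∀ j, ∫ x : ℝ, (F j x : ℂ) * cexp (I * g x) = 0 := by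
  have hbd : ∀ k, ∃ C, ∀ x, |φ k x| ≤ C := fun k =>
    (hφc k).exists_bound_of_continuous (hφ k).continuous
  choose C hC using hbd
  set K : ℝ := 2 * ∑ k, C k with hK
  set M : ℝ := ∑ j, ∫ x, |F j x| with hMdef
  have hM : ∀ j, ∫ x, |F j x| ≤ M := fun j =>
    Finset.single_le_sum (f := fun j => ∫ x, |F j x|)
      (fun i _ => integral_nonneg fun x => abs_nonneg _) (Finset.mem_univ j)
  have hM0 : 0 ≤ M := Finset.sum_nonneg fun i _ => integral_nonneg fun x => abs_nonneg _
  -- `ε` (independent of `N`) and `η` make the Lipschitz constant of the error at most `1 / 2`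
  set ε : ℝ := 1 / (20 * K ^ 2 * M + 1) with hεdef
  have hε : 0 < ε := by positivity
  have hεK : 5 * K ^ 2 * ε * M ≤ 1 / 4 := by
    rw [hεdef]
    have : 0 < 20 * K ^ 2 * M + 1 := by positivity
    rw [show 5 * K ^ 2 * (1 / (20 * K ^ 2 * M + 1)) * M = (5 * K ^ 2 * M) / (20 * K ^ 2 * M + 1)
      by ring, div_le_iff₀ this]
    linarith
  set η : ℝ := 1 / (4 * (Fintype.card ι + 1)) with hηdef
  have hη : 0 < η := by positivity
  have hηc : Fintype.card ι * η ≤ 1 / 4 := by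
    rw [hηdef, mul_one_div, div_le_iff₀ (by positivity)]
    linarith
  -- the radius beyond which the phase may be cut off
  obtain ⟨R, hR0, hRφ, hRF⟩ : ∃ R : ℝ, 0 < R ∧
      (∀ k, tsupport (φ k) ⊆ Metric.closedBall 0 R) ∧
      ∀ j, ∫ x in (Metric.closedBall (0:ℝ) R)ᶜ, |F j x| ≤ ε / 8 := by
    have h1 : ∀ᶠ R : ℝ in atTop, ∀ k, tsupport (φ k) ⊆ Metric.closedBall 0 R := by
      rw [eventually_all]
      intro k
      obtain ⟨r, hr⟩ := (hφc k).isBounded.subset_closedBall 0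
      filter_upwards [eventually_ge_atTop r] with R hR
      exact hr.trans (Metric.closedBall_subset_closedBall hR)
    have h2 : ∀ᶠ R : ℝ in atTop, ∀ j, ∫ x in (Metric.closedBall (0:ℝ) R)ᶜ, |F j x| ≤ ε / 8 := by
      rw [eventually_all]
      intro j
      exact (tendsto_integral_tail (F j) (hF j)).eventually_le_const (by positivity)
    obtain ⟨R, a, b, c⟩ := ((eventually_gt_atTop 0).and (h1.and h2)).exists
    exact ⟨R, a, b, c⟩
  obtain ⟨N, hN1, hN2⟩ : ∃ N : ℝ,
      (∀ j k, ‖∫ x, ((F j x * φ k x : ℝ) : ℂ) * cexp (I * ((2 * N * x : ℝ) : ℂ))‖ ≤ η) ∧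
      ∀ j, ‖∫ x, (F j x : ℂ) * cexp (I * ((N * x : ℝ) : ℂ))‖ ≤ ε / 4 := by
    have h1 : ∀ᶠ N : ℝ in atTop, ∀ j k,
        ‖∫ x, ((F j x * φ k x : ℝ) : ℂ) * cexp (I * ((2 * N * x : ℝ) : ℂ))‖ ≤ η := by
      rw [eventually_all]; intro j; rw [eventually_all]; intro k
      have := (tendsto_integral_mul_exp (fun x => F j x * φ k x)).comp
        (tendsto_id.const_mul_atTop (zero_lt_two (α := ℝ)))
      exact (tendsto_zero_iff_norm_tendsto_zero.1 this).eventually_le_const hη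
    have h2 : ∀ᶠ N : ℝ in atTop, ∀ j,
        ‖∫ x, (F j x : ℂ) * cexp (I * ((N * x : ℝ) : ℂ))‖ ≤ ε / 4 := by
      rw [eventually_all]; intro j
      exact (tendsto_zero_iff_norm_tendsto_zero.1
        (tendsto_integral_mul_exp (F j))).eventually_le_const (by positivity)
    exact (h1.and h2).exists
  let χ : ContDiffBump (0 : ℝ) := ⟨R, R + 1, hR0, by linarith⟩
  set p : ℝ → ℝ := fun x => N * x * χ x with hpdef
  have hpR : ∀ x ∈ Metric.closedBall (0:ℝ) R, p x = N * x := fun x hx => by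
    rw [hpdef]
    simp only
    rw [χ.one_of_mem_closedBall hx, mul_one]
  have hpd : ContDiff ℝ (⊤ : ℕ∞) p :=
    (contDiff_const.mul contDiff_id).mul χ.contDiff
  have hpsupp : HasCompactSupport p := χ.hasCompactSupport.mul_left
  have hp : ∀ k x, φ k x ≠ 0 → p x = N * x := fun k x hx =>
    hpR x (hRφ k (subset_tsupport _ hx))
  set G : (ι → ℂ) → (ι → ℂ) := fun z j =>
    -I * (∫ x, (F j x : ℂ) * cexp (I * ((p x + pert φ N z x : ℝ) : ℂ))) with hG
  have hG0 : ‖G 0‖ ≤ ε / 2 := by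
    refine (pi_norm_le_iff_of_nonneg (by positivity)).2 fun j => ?_
    have e0 : ∀ x, pert φ N 0 x = 0 := fun x => by simp [pert]
    have i1 := integrable_mul_exp (hF j) hpd.continuous
    have i2 := integrable_mul_exp (hF j) (q := fun x => N * x) (by fun_prop)
    have e : (∫ x, (F j x : ℂ) * cexp (I * (p x : ℂ))) =
        (∫ x, (F j x : ℂ) * cexp (I * ((N * x : ℝ) : ℂ))) +
        ∫ x, ((F j x : ℂ) * cexp (I * (p x : ℂ)) -
          (F j x : ℂ) * cexp (I * ((N * x : ℝ) : ℂ))) := by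
      rw [integral_sub i1 i2]; ring
    have ht : ‖∫ x, ((F j x : ℂ) * cexp (I * (p x : ℂ)) -
          (F j x : ℂ) * cexp (I * ((N * x : ℝ) : ℂ)))‖ ≤ ε / 4 := by
      have hms : MeasurableSet (Metric.closedBall (0:ℝ) R)ᶜ :=
        Metric.isClosed_closedBall.measurableSet.compl
      calc _ ≤ ∫ x, (Metric.closedBall (0:ℝ) R)ᶜ.indicator (fun x => |F j x| * 2) x := by
            refine norm_integral_le_of_norm_le (((hF j).abs.mul_const _).indicator hms)
              (Filter.Eventually.of_forall fun x => ?_)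
            by_cases hx : x ∈ Metric.closedBall (0:ℝ) R
            · rw [hpR x hx, sub_self, norm_zero]
              exact Set.indicator_nonneg (fun _ _ => by positivity) _
            · rw [Set.indicator_of_mem hx, ← mul_sub, norm_mul, Complex.norm_real,
                Real.norm_eq_abs]
              refine mul_le_mul_of_nonneg_left ((norm_sub_le _ _).trans ?_) (abs_nonneg _)
              rw [Complex.norm_exp_I_mul_ofReal, Complex.norm_exp_I_mul_ofReal]
              norm_num
        _ = (∫ x in (Metric.closedBall (0:ℝ) R)ᶜ, |F j x|) * 2 := by
            rw [integral_indicator hms, integral_mul_const]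
        _ ≤ ε / 4 := by linarith [hRF j]
    simp only [hG, e0, add_zero]
    rw [norm_mul, norm_neg, norm_I, one_mul, e]
    linarith [norm_add_le (∫ x, (F j x : ℂ) * cexp (I * ((N * x : ℝ) : ℂ)))
      (∫ x, ((F j x : ℂ) * cexp (I * (p x : ℂ)) -
          (F j x : ℂ) * cexp (I * ((N * x : ℝ) : ℂ)))), hN2 j]
  have hlip : ApproximatesLinearOn G (ContinuousLinearMap.id ℂ (ι → ℂ))
      (Metric.closedBall 0 ε) (1 / 2) := by
    intro z hz w hw
    rw [mem_closedBall_zero_iff] at hz hw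
    refine (pi_norm_le_iff_of_nonneg (by positivity)).2 fun j => ?_
    refine (approx_linear hF hφ hC hdual hpd.continuous hp hK hM hN1 hz hw j).trans ?_
    refine mul_le_mul_of_nonneg_right ?_ (norm_nonneg _)
    push_cast
    linarith
  -- The image of the ball of radius `ε` contains the ball of radius `(1 - 1 / 2) * ε` about `G 0`.
  let inv : (ContinuousLinearMap.id ℂ (ι → ℂ)).NonlinearRightInverse :=
    ⟨id, 1, fun y => by simp, fun y => rfl⟩
  obtain ⟨z, -, hz⟩ := hlip.surjOn_closedBall_of_nonlinearRightInverse inv hε.le subset_rfl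
    (show (0 : ι → ℂ) ∈ _ by
      rw [mem_closedBall_iff_norm, zero_sub, norm_neg]
      refine hG0.trans (le_of_eq ?_)
      simp only [inv]
      push_cast
      ring)
  refine ⟨fun x => p x + pert φ N z x, hpd.add (contDiff_pert hφ N z),
    hpsupp.add (hasCompactSupport_pert hφc N z), fun j => ?_⟩
  have := congrFun hz j
  simpa [hG] using this

end

/-! ### Reduction of the general case -/

/-- The real vector space `C_c^∞(ℝ; ℝ)` of test functions. -/
def testSubmodule : Submodule ℝ (ℝ → ℝ) where
  carrier := {φ | ContDiff ℝ (⊤ : ℕ∞) φ ∧ HasCompactSupport φ}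
  add_mem' := fun ha hb => ⟨ha.1.add hb.1, ha.2.add hb.2⟩
  zero_mem' := ⟨contDiff_const, HasCompactSupport.zero⟩
  smul_mem' := fun c _ ha => ⟨contDiff_const.smul ha.1, ha.2.smul_left (f := fun _ => c)⟩

lemma integrable_mul_test {G : ℝ → ℝ} (hG : Integrable G) (φ : testSubmodule) :
    Integrable (fun x => G x * φ.1 x) := by
  obtain ⟨C, hC⟩ := φ.2.2.exists_bound_of_continuous φ.2.1.continuous
  exact hG.mul_bdd (c := C) φ.2.1.continuous.aestronglyMeasurable (Filter.Eventually.of_forall hC)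

/-- The linear map `φ ↦ (∫ f j * φ)_j` on test functions. -/
noncomputable def pairing {n : ℕ} (f : Fin n → ℝ → ℝ) (hf : ∀ j, Integrable (f j)) :
    testSubmodule →ₗ[ℝ] (Fin n → ℝ) where
  toFun φ j := ∫ x, f j x * φ.1 x
  map_add' φ ψ := by
    ext j
    simp only [Submodule.coe_add, Pi.add_apply, mul_add]
    exact integral_add (integrable_mul_test (hf j) φ) (integrable_mul_test (hf j) ψ)
  map_smul' c φ := by
    ext j
    simp only [Submodule.coe_smul, Pi.smul_apply, smul_eq_mul, RingHom.id_apply]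
    rw [← integral_const_mul]
    congr 1
    ext x
    ring

/-- Smooth Hobby–Rice theorem on the real line: for `n ≥ 1` real-valued integrable
functions on `ℝ` there is a real-valued `g ∈ C_c^∞(ℝ; ℝ)` with `∫_ℝ f_j e^{ig} = 0`. -/
theorem smooth_hobby_rice_real_line (n : ℕ) (hn : 1 ≤ n) (f : Fin n → ℝ → ℝ)
    (hf : ∀ j, Integrable (f j)) :
    ∃ g : ℝ → ℝ, ContDiff ℝ (⊤ : ℕ∞) g ∧ HasCompactSupport g ∧
      ∀ j, ∫ x : ℝ, (f j x : ℂ) * Complex.exp (Complex.I * g x) = 0 := by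
  set T := pairing f hf with hT
  let b := Module.finBasis ℝ (LinearMap.range T)
  choose φ hφ using fun k => (b k).2
  choose c hc using fun k => LinearMap.exists_extend (b.coord k)
  have hc' : ∀ k (v : LinearMap.range T), c k v = b.repr v k := fun k v => by
    have := LinearMap.congr_fun (hc k) v
    simpa using this
  let F : Fin (Module.finrank ℝ (LinearMap.range T)) → ℝ → ℝ := fun k x =>
    ∑ j, c k (Pi.single j 1) * f j x
  have hF : ∀ k, Integrable (F k) := fun k =>
    integrable_finsetSum _ fun j _ => (hf j).const_mul _
  -- `c k` extends the `k`-th coordinate functional on `range T`, so the `F k` are dual to the `φ k`.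
  have hpair : ∀ k (ψ : testSubmodule), ∫ x, F k x * ψ.1 x = c k (T ψ) := by
    intro k ψ
    simp only [F, Finset.sum_mul, mul_assoc]
    rw [integral_finsetSum _ fun j _ => (integrable_mul_test (hf j) ψ).const_mul _]
    simp only [integral_const_mul]
    rw [LinearMap.pi_apply_eq_sum_univ (c k) (T ψ)]
    refine Finset.sum_congr rfl fun j _ => ?_
    rw [smul_eq_mul, mul_comm]
    congr 2
    ext i
    simp [Pi.single_apply, eq_comm]
  obtain ⟨g, hg, hgc, hg0⟩ := exists_phase_of_dual (F := F) (φ := fun k => (φ k).1) hF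
    (fun k => (φ k).2.1) (fun k => (φ k).2.2) (fun j k => by
      rw [hpair, hφ, hc', b.repr_self, Finsupp.single_apply]
      simp only [eq_comm])
  refine ⟨g, hg, hgc, fun j => ?_⟩
  have hae : ∀ᵐ x, f j x - ∑ k, (b k).1 j * F k x = 0 := by
    have hint : Integrable (fun x => f j x - ∑ k, (b k).1 j * F k x) :=
      (hf j).sub (integrable_finsetSum _ fun k _ => (hF k).const_mul _)
    refine ae_eq_zero_of_integral_contDiff_smul_eq_zero hint.locallyIntegrable fun ψ h1 h2 => ?_
    let ψ' : testSubmodule := ⟨ψ, h1, h2⟩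
    have e : ∀ x, ψ x • (f j x - ∑ k, (b k).1 j * F k x) =
        f j x * ψ'.1 x - ∑ k, (b k).1 j * (F k x * ψ'.1 x) := fun x => by
      simp only [ψ', smul_eq_mul, mul_sub, Finset.mul_sum]
      congr 1
      · ring
      · exact Finset.sum_congr rfl fun k _ => by ring
    simp_rw [e]
    rw [integral_sub (integrable_mul_test (hf j) ψ')
      (integrable_finsetSum _ fun k _ => (integrable_mul_test (hF k) ψ').const_mul _),
      integral_finsetSum _ fun k _ => (integrable_mul_test (hF k) ψ').const_mul _]
    simp only [integral_const_mul, hpair]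
    have h3 := b.sum_repr ⟨T ψ', LinearMap.mem_range_self T ψ'⟩
    have h4 := congrFun (congrArg Subtype.val h3) j
    simp only [Submodule.coe_sum, Submodule.coe_smul, Finset.sum_apply, Pi.smul_apply,
      smul_eq_mul] at h4
    have h5 : ∀ k, c k (T ψ') = b.repr ⟨T ψ', LinearMap.mem_range_self T ψ'⟩ k := fun k =>
      hc' k ⟨T ψ', LinearMap.mem_range_self T ψ'⟩
    simp only [h5]
    rw [sub_eq_zero]
    refine Eq.trans ?_ (h4.symm.trans (Finset.sum_congr rfl fun k _ => mul_comm _ _))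
    rfl
  have e : (fun x => (f j x : ℂ) * cexp (I * g x)) =ᵐ[volume]
      fun x => ∑ k, ((b k).1 j : ℂ) * ((F k x : ℂ) * cexp (I * g x)) := by
    filter_upwards [hae] with x hx
    rw [sub_eq_zero.1 hx]
    push_cast
    rw [Finset.sum_mul]
    exact Finset.sum_congr rfl fun k _ => by ring
  rw [integral_congr_ae e, integral_finsetSum _ fun k _ =>
    (integrable_mul_exp (hF k) hg.continuous).const_mul _]
  refine Finset.sum_eq_zero fun k _ => ?_
  rw [integral_const_mul, hg0, mul_zero]
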